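/- arXiv:2506.15836 — 2 statements merged into one kernel-verified Lean document; each statement's English description precedes it below -/
import Mathlib

section
/- Let 𝒳 and 𝒴 be finite nonempty types, let W : 𝒳 → 𝒴 → ℝ satisfy W x y > 0 for all x, y and Σ_y W x y = 1 for every x, and let P : ℝ → 𝒳 → ℝ be a family of probability mass functions such that for every ψ ∈ ℝ and x ∈ 𝒳 one has P ψ x > 0 and Σ_x P ψ x = 1, and such that for each x the map ψ ↦ P ψ x is differentiable. Define the output marginal p ψ y = Σ_x P ψ x · W x y and the mutual information I(ψ) = Σ_{x,y} P ψ x · W x y · log( W x y / p ψ y ). Then for every ψ, I is differentiable at ψ with derivative I'(ψ) = Σ_{x,y} P ψ x · W x y · (d/dψ log(P ψ x)) · log( W x y / p ψ y ). -/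
/-!
Write `D x` for the derivative of `P · x` at `ψ`. The product rule gives each summand of `I` the
derivative `D x * W x y * log (W x y / p ψ y) - P ψ x * W x y * (p' y / p ψ y)`, where
`p' y = ∑ x, D x * W x y`. The first part is the score expression, since
`P ψ x * (log P)' = D x`. The second part sums over `x` to `p' y`, and
`∑ y, p' y = ∑ x, D x = 0` because the rows of `W` and the distributions `P t` sum to one.
-/

/-- Gradient of the mutual information with respect to the
input-distribution parameter ψ (paper's Theorem 5, finite alphabets,
one-dimensional parameter). -/
theorem mutualInfo_hasDerivAt_score
    {𝒳 𝒴 : Type*} [Fintype 𝒳] [Fintype 𝒴] [Nonempty 𝒳] [Nonempty 𝒴]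
    (W : 𝒳 → 𝒴 → ℝ)
    (hWpos : ∀ x y, 0 < W x y)
    (hWsum : ∀ x, ∑ y, W x y = 1)
    (P : ℝ → 𝒳 → ℝ)
    (hPpos : ∀ ψ x, 0 < P ψ x)
    (hPsum : ∀ ψ, ∑ x, P ψ x = 1)
    (hPdiff : ∀ x, Differentiable ℝ (fun ψ => P ψ x))
    (p : ℝ → 𝒴 → ℝ)
    (hp : ∀ ψ y, p ψ y = ∑ x, P ψ x * W x y)
    (I : ℝ → ℝ)
    (hI : ∀ ψ, I ψ = ∑ x, ∑ y, P ψ x * W x y * Real.log (W x y / p ψ y))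
    (ψ : ℝ) :
    HasDerivAt I
      (∑ x, ∑ y, P ψ x * W x y * deriv (fun t => Real.log (P t x)) ψ *
        Real.log (W x y / p ψ y)) ψ := by
  have hD : ∀ x, HasDerivAt (fun t => P t x) (deriv (fun t => P t x) ψ) ψ :=
    fun x => (hPdiff x ψ).hasDerivAt
  set D : 𝒳 → ℝ := fun x => deriv (fun t => P t x) ψ with hDdef
  have hppos : ∀ t y, 0 < p t y := fun t y => by
    rw [hp]
    exact Finset.sum_pos (fun x _ => mul_pos (hPpos t x) (hWpos x y)) Finset.univ_nonempty
  have hpD : ∀ y, HasDerivAt (fun t => p t y) (∑ x, D x * W x y) ψ := fun y => by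
    simp only [hp]
    exact HasDerivAt.fun_sum fun x _ => (hD x).mul_const (W x y)
  have hDsum : ∑ x, D x = 0 := by
    have h : HasDerivAt (fun t => ∑ x, P t x) (∑ x, D x) ψ :=
      HasDerivAt.fun_sum fun x _ => hD x
    simp only [hPsum] at h
    exact h.unique (hasDerivAt_const ψ (1 : ℝ))
  have hscore : ∀ x, deriv (fun t => Real.log (P t x)) ψ = D x / P ψ x := fun x =>
    ((hD x).log (hPpos ψ x).ne').deriv
  have hterm : ∀ x y, HasDerivAt (fun t => P t x * W x y * Real.log (W x y / p t y))
      (D x * W x y * Real.log (W x y / p ψ y)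
        - P ψ x * W x y * ((∑ x', D x' * W x' y) / p ψ y)) ψ := fun x y => by
    have hlog : ∀ t, Real.log (W x y / p t y) = Real.log (W x y) - Real.log (p t y) :=
      fun t => Real.log_div (hWpos x y).ne' (hppos t y).ne'
    simp only [hlog]
    refine (((hD x).mul_const (W x y)).fun_mul
      (((hpD y).log (hppos ψ y).ne').const_sub (Real.log (W x y)))).congr_deriv ?_
    simp only [hDdef]
    ring
  have hzero : ∑ x, ∑ y, P ψ x * W x y * ((∑ x', D x' * W x' y) / p ψ y) = 0 := by
    calc ∑ x, ∑ y, P ψ x * W x y * ((∑ x', D x' * W x' y) / p ψ y)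
        = ∑ y, ∑ x', D x' * W x' y := by
          rw [Finset.sum_comm]
          refine Finset.sum_congr rfl fun y _ => ?_
          rw [← Finset.sum_mul, ← hp, mul_div_cancel₀ _ (hppos ψ y).ne']
      _ = ∑ x', D x' := by
          rw [Finset.sum_comm]
          refine Finset.sum_congr rfl fun x _ => ?_
          rw [← Finset.mul_sum, hWsum, mul_one]
      _ = 0 := hDsum
  rw [show I = fun t => ∑ x, ∑ y, P t x * W x y * Real.log (W x y / p t y) from funext hI]
  refine (HasDerivAt.fun_sum fun x _ => HasDerivAt.fun_sum fun y _ => hterm x y).congr_deriv ?_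
  simp only [Finset.sum_sub_distrib]
  rw [hzero, sub_zero]
  refine Finset.sum_congr rfl fun x _ => Finset.sum_congr rfl fun y _ => ?_
  rw [hscore]
  have := (hPpos ψ x).ne'
  field_simp
end

section
/- Let n be a natural number and N = 2^n. Let F be the 2×2 matrix over ZMod 2 with rows (1,0) and (1,1), let F^{⊗n} be its n-fold Kronecker power (an N×N matrix over ZMod 2), and let B_N be the bit-reversal permutation matrix on Fin N. Then the polar generator matrix G_N = B_N · F^{⊗n} satisfies G_N · G_N = I_N, the N×N identity matrix over ZMod 2. -/
/-!
Write `A = F^{⊗n}` and `B` for the bit-reversal matrix. Since `F² = 1` over `ZMod 2`, the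
mixed-product property of the Kronecker product gives `A² = 1` (`kronPow_mul_self`). The entry
`A i j` is the product over `k < n` of the entries of `F` at the `k`-th bits of `i` and `j`
(`kronPow_apply`). Bit reversal `σ` only permutes these factors, so `A (σ i) (σ j) = A i j`
(`kronPow_bitRevPerm`), that is, `A` commutes with `B`. As `σ` is an involution, `B² = 1`, and
therefore `(B A)² = B² A² = 1`.
-/

open Matrix Kronecker

/-- The Arıkan polar kernel, the 2×2 matrix over `ZMod 2` with rows (1,0) and (1,1). -/
def polarKernel : Matrix (Fin 2) (Fin 2) (ZMod 2) := !![1, 0; 1, 1]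

/-- The index identification `Fin 2 × Fin (2^n) ≃ Fin (2^(n+1))` sending the
pair `(i₁, i₂)` (with `i₁` the major/most-significant component) to `i₂ + 2^n * i₁`. -/
def kronIdx (n : ℕ) : Fin 2 × Fin (2 ^ n) ≃ Fin (2 ^ (n + 1)) :=
  finProdFinEquiv.trans (finCongr (pow_succ' 2 n).symm)

/-- The n-fold Kronecker power of a 2×2 matrix over `ZMod 2`, as a `2^n × 2^n` matrix. -/
def kronPow (F : Matrix (Fin 2) (Fin 2) (ZMod 2)) :
    (n : ℕ) → Matrix (Fin (2 ^ n)) (Fin (2 ^ n)) (ZMod 2)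
  | 0 => 1
  | n + 1 => Matrix.reindex (kronIdx n) (kronIdx n) (F ⊗ₖ kronPow F n)

/-- The bit-reversal permutation on `Fin (2^n)`: the index with binary digits
(b₀, …, b_{n−1}) (least significant bit first) is sent to the index with binary
digits (b_{n−1}, …, b₀). Defined recursively: the least significant bit of the
input becomes the most significant bit of the output. -/
def bitRevPerm : (n : ℕ) → Equiv.Perm (Fin (2 ^ n))
  | 0 => Equiv.refl _
  | n + 1 =>
    (finCongr (pow_succ 2 n)).trans <|
      finProdFinEquiv.symm.trans <|
        (Equiv.prodCongr (bitRevPerm n) (Equiv.refl (Fin 2))).trans <|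
          (Equiv.prodComm (Fin (2 ^ n)) (Fin 2)).trans <|
            finProdFinEquiv.trans (finCongr (pow_succ' 2 n).symm)

/-- The permutation matrix over `ZMod 2` of a permutation σ of `Fin N`:
its (i, j) entry is 1 exactly when `i = σ j`. -/
def permMatrix {N : ℕ} (σ : Equiv.Perm (Fin N)) : Matrix (Fin N) (Fin N) (ZMod 2) :=
  Matrix.of fun i j => if i = σ j then 1 else 0

/-- The bit-reversal permutation matrix on `Fin (2^n)`. -/
def bitRevMatrix (n : ℕ) : Matrix (Fin (2 ^ n)) (Fin (2 ^ n)) (ZMod 2) :=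
  permMatrix (bitRevPerm n)

/-- The `k`-th binary digit of `i`, as an index of a 2×2 matrix. -/
def bitIdx (i k : ℕ) : Fin 2 := if i.testBit k then 1 else 0

theorem kronIdx_val (n : ℕ) (a : Fin 2) (x : Fin (2 ^ n)) :
    (kronIdx n (a, x) : ℕ) = 2 ^ n * a + x := by
  simp [kronIdx, finProdFinEquiv]
  ring

theorem bitIdx_kronIdx_lt {n k : ℕ} (hk : k < n) (a : Fin 2) (x : Fin (2 ^ n)) :
    bitIdx (kronIdx n (a, x)) k = bitIdx x k := by
  simp [bitIdx, kronIdx_val, Nat.testBit_two_pow_mul_add _ x.isLt, hk]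

theorem bitIdx_kronIdx_self (n : ℕ) (a : Fin 2) (x : Fin (2 ^ n)) :
    bitIdx (kronIdx n (a, x)) n = a := by
  rw [bitIdx, kronIdx_val, Nat.testBit_two_pow_mul_add _ x.isLt]
  fin_cases a <;> simp

theorem kronPow_apply (F : Matrix (Fin 2) (Fin 2) (ZMod 2)) (n : ℕ) (i j : Fin (2 ^ n)) :
    kronPow F n i j = ∏ k ∈ Finset.range n, F (bitIdx i k) (bitIdx j k) := by
  induction n with
  | zero =>
    have : i = j := Subsingleton.elim (α := Fin 1) i j
    subst this
    simp [kronPow]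
  | succ n ih =>
    obtain ⟨⟨a, x⟩, rfl⟩ := (kronIdx n).surjective i
    obtain ⟨⟨b, y⟩, rfl⟩ := (kronIdx n).surjective j
    rw [Finset.prod_range_succ, bitIdx_kronIdx_self, bitIdx_kronIdx_self, mul_comm]
    simp only [kronPow, Matrix.reindex_apply, Matrix.submatrix_apply, Equiv.symm_apply_apply,
      Matrix.kroneckerMap_apply, ih]
    congr 1
    refine Finset.prod_congr rfl fun k hk => ?_
    rw [bitIdx_kronIdx_lt (Finset.mem_range.mp hk), bitIdx_kronIdx_lt (Finset.mem_range.mp hk)]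

theorem testBit_bitRevPerm (n : ℕ) (i : Fin (2 ^ n)) {k : ℕ} (hk : k < n) :
    (bitRevPerm n i : ℕ).testBit k = (i : ℕ).testBit (n - 1 - k) := by
  induction n generalizing k with
  | zero => omega
  | succ n ih =>
    have hi : (i : ℕ) / 2 < 2 ^ n := by
      have := i.isLt
      have h2 := pow_succ 2 n
      omega
    have hval : (bitRevPerm (n + 1) i : ℕ)
        = 2 ^ n * (i % 2 : ℕ) + bitRevPerm n ⟨i / 2, hi⟩ := by
      simp [bitRevPerm, finProdFinEquiv, Fin.divNat, Fin.modNat]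
      ring
    rw [hval, Nat.testBit_two_pow_mul_add _ (Fin.isLt _)]
    split_ifs with h
    · rw [ih _ h, Nat.testBit_div_two]
      congr 1
      omega
    · obtain rfl : k = n := by omega
      simp

theorem bitRevPerm_bitRevPerm (n : ℕ) (i : Fin (2 ^ n)) :
    bitRevPerm n (bitRevPerm n i) = i := by
  apply Fin.ext
  apply Nat.eq_of_testBit_eq
  intro k
  by_cases hk : k < n
  · rw [testBit_bitRevPerm n _ hk, testBit_bitRevPerm n _ (by omega)]
    congr 1
    omega
  · have hle : 2 ^ n ≤ 2 ^ k := Nat.pow_le_pow_right (by norm_num) (by omega)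
    rw [Nat.testBit_lt_two_pow (lt_of_lt_of_le (Fin.isLt _) hle),
      Nat.testBit_lt_two_pow (lt_of_lt_of_le (Fin.isLt _) hle)]

theorem kronPow_bitRevPerm (F : Matrix (Fin 2) (Fin 2) (ZMod 2)) (n : ℕ) (i j : Fin (2 ^ n)) :
    kronPow F n (bitRevPerm n i) (bitRevPerm n j) = kronPow F n i j := by
  rw [kronPow_apply, kronPow_apply, ← Finset.prod_range_reflect]
  refine Finset.prod_congr rfl fun k hk => ?_
  have hk := Finset.mem_range.mp hk
  have h : n - 1 - (n - 1 - k) = k := by omega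
  simp only [bitIdx]
  rw [testBit_bitRevPerm n i (by omega), testBit_bitRevPerm n j (by omega), h]

theorem kronPow_mul_self {F : Matrix (Fin 2) (Fin 2) (ZMod 2)} (hF : F * F = 1) (n : ℕ) :
    kronPow F n * kronPow F n = 1 := by
  induction n with
  | zero => simp [kronPow]
  | succ n ih =>
    simp only [kronPow, Matrix.reindex_apply]
    rw [Matrix.submatrix_mul_equiv, ← Matrix.mul_kronecker_mul, hF, ih, Matrix.one_kronecker_one,
      Matrix.submatrix_one_equiv]

theorem bitRevMatrix_mul_self (n : ℕ) : bitRevMatrix n * bitRevMatrix n = 1 := by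
  ext i j
  simp [bitRevMatrix, permMatrix, Matrix.mul_apply, bitRevPerm_bitRevPerm, Matrix.one_apply]

theorem bitRevMatrix_comm (F : Matrix (Fin 2) (Fin 2) (ZMod 2)) (n : ℕ) :
    kronPow F n * bitRevMatrix n = bitRevMatrix n * kronPow F n := by
  ext i j
  have h : ∀ x, i = bitRevPerm n x ↔ bitRevPerm n i = x := fun x =>
    ⟨fun h => by rw [h, bitRevPerm_bitRevPerm], fun h => by rw [← h, bitRevPerm_bitRevPerm]⟩
  simp only [bitRevMatrix, permMatrix, Matrix.mul_apply, Matrix.of_apply, h]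
  simp only [mul_ite, mul_one, mul_zero, ite_mul, one_mul, zero_mul, Finset.sum_ite_eq,
    Finset.sum_ite_eq', Finset.mem_univ, if_true]
  rw [← kronPow_bitRevPerm F n i, bitRevPerm_bitRevPerm]

/-- The polar generator matrix `G_N = B_N · F^{⊗n}` is an involution:
`G_N · G_N = I_N` over `ZMod 2`. -/
theorem polarGenerator_mul_self_eq_one (n : ℕ) :
    (bitRevMatrix n * kronPow polarKernel n) * (bitRevMatrix n * kronPow polarKernel n)
      = (1 : Matrix (Fin (2 ^ n)) (Fin (2 ^ n)) (ZMod 2)) := by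
  have hF : polarKernel * polarKernel = 1 := by decide
  rw [Matrix.mul_assoc, ← Matrix.mul_assoc (kronPow polarKernel n), bitRevMatrix_comm,
    Matrix.mul_assoc, kronPow_mul_self hF, Matrix.mul_one, bitRevMatrix_mul_self]
end
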